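/- (Bottom of the ascent for k = 3) In the Cholesky setting, (1/10)Tr(𝛉⁵) = ∂( (1/2)Tr(θ₁³θ₂ + θ₁θ₂³ + (1/2)(θ₁θ₂)²) ). -/

import Mathlib

/-- An abstract model of the Dolbeault double complex of `(p,q)`-forms on a complex
manifold: a bigraded associative `ℂ`-algebra `Ω = ⨁ Ω^{p,q}`, graded-commutative with
respect to total degree, with `ℂ`-linear operators `∂` (`pd`) and `∂̄` (`pdb`) of
bidegrees `(1,0)` and `(0,1)`, squaring to zero and anticommuting, satisfying the
graded Leibniz rule. -/
structure DolbeaultAlgebra (Ω : Type*) [Ring Ω] [Algebra ℂ Ω] where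
  /-- the `ℂ`-subspace of elements of bidegree `(p,q)` -/
  deg : ℕ → ℕ → Submodule ℂ Ω
  one_mem : (1 : Ω) ∈ deg 0 0
  mul_mem : ∀ {p q p' q'} {a b : Ω}, a ∈ deg p q → b ∈ deg p' q' →
    a * b ∈ deg (p + p') (q + q')
  gcomm : ∀ {p q p' q'} (a b : Ω), a ∈ deg p q → b ∈ deg p' q' →
    a * b = ((-1 : ℂ) ^ ((p + q) * (p' + q'))) • (b * a)
  /-- the operator `∂` -/
  pd : Ω →ₗ[ℂ] Ω
  /-- the operator `∂̄` -/
  pdb : Ω →ₗ[ℂ] Ω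
  pd_mem : ∀ {p q} {a : Ω}, a ∈ deg p q → pd a ∈ deg (p + 1) q
  pdb_mem : ∀ {p q} {a : Ω}, a ∈ deg p q → pdb a ∈ deg p (q + 1)
  pd_pd : ∀ a : Ω, pd (pd a) = 0
  pdb_pdb : ∀ a : Ω, pdb (pdb a) = 0
  pd_pdb : ∀ a : Ω, pd (pdb a) + pdb (pd a) = 0
  pd_leibniz : ∀ {p q} (a b : Ω), a ∈ deg p q →
    pd (a * b) = pd a * b + ((-1 : ℂ) ^ (p + q)) • (a * pd b)
  pdb_leibniz : ∀ {p q} (a b : Ω), a ∈ deg p q →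
    pdb (a * b) = pdb a * b + ((-1 : ℂ) ^ (p + q)) • (a * pdb b)

namespace DolbeaultAlgebra

variable {Ω : Type*} [Ring Ω] [Algebra ℂ Ω] {r : ℕ}

/-- the entrywise extension of `∂` to `r × r` matrices over `Ω` -/
def mpd (A : DolbeaultAlgebra Ω) (M : Matrix (Fin r) (Fin r) Ω) :
    Matrix (Fin r) (Fin r) Ω := M.map A.pd

/-- the entrywise extension of `∂̄` to `r × r` matrices over `Ω` -/
def mpdb (A : DolbeaultAlgebra Ω) (M : Matrix (Fin r) (Fin r) Ω) :
    Matrix (Fin r) (Fin r) Ω := M.map A.pdb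

/-- the assertion that all entries of a matrix lie in `Ω^{p,q}` -/
def MatDeg (A : DolbeaultAlgebra Ω) (p q : ℕ) (M : Matrix (Fin r) (Fin r) Ω) : Prop :=
  ∀ i j, M i j ∈ A.deg p q

end DolbeaultAlgebra

variable {Ω : Type*} [Ring Ω] [Algebra ℂ Ω]

/-!
Since `h = cb`, the form `h⁻¹∂h` is conjugate by `b` to `θ₁ + θ₂`, so by degree-zero conjugation
their powers have the same trace. The Maurer–Cartan equations read `∂θ₁ = θ₁²` and
`∂θ₂ = -θ₂²`. The 30 mixed words of length five in `θ₁`, `θ₂` fall into six cyclic classes of five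
words each, on which the trace is constant because a letter commutes without sign past a word of
four letters; under the trace, one representative of each class adds up to the `∂`-derivative of
`θ₁³θ₂ + θ₁θ₂³ + (1/2)(θ₁θ₂)²`. The two pure words have trace zero: `θ₁` and `θ₂` are triangular,
so the diagonals of their powers consist of powers of odd scalars, which square to zero.
-/

section Triangular

variable {R n α : Type*} [LinearOrder α] [Fintype n] {f : n → α} {M N : Matrix n n R}

theorem blockTriangular_mul_apply_self [NonUnitalNonAssocSemiring R] (hf : f.Injective)
    (hM : M.BlockTriangular f) (hN : N.BlockTriangular f) (i : n) :
    (M * N) i i = M i i * N i i := by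
  rw [Matrix.mul_apply]
  refine Fintype.sum_eq_single i fun k hk => ?_
  rcases lt_or_gt_of_ne (hf.ne hk) with hlt | hgt
  · rw [hM hlt, zero_mul]
  · rw [hN hgt, mul_zero]

theorem blockTriangular_pow_apply_self [DecidableEq n] [Semiring R] (hf : f.Injective)
    (hM : M.BlockTriangular f) (i : n) (k : ℕ) : (M ^ k) i i = M i i ^ k := by
  induction k with
  | zero => simp
  | succ k ih =>
    rw [pow_succ, pow_succ, blockTriangular_mul_apply_self hf (hM.pow k) hM, ih]

end Triangular

namespace DolbeaultAlgebra

variable {A : DolbeaultAlgebra Ω}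

theorem mul_self_eq_zero_of_odd {p q : ℕ} {a : Ω} (ha : a ∈ A.deg p q) (hodd : Odd (p + q)) :
    a * a = 0 := by
  have hneg := A.gcomm a a ha ha
  rw [(hodd.mul hodd).neg_one_pow, neg_one_smul] at hneg
  have := IsAddTorsionFree.of_isTorsionFree ℂ Ω
  exact self_eq_neg.mp hneg

theorem pd_one : A.pd 1 = 0 := by
  simpa using A.pd_leibniz 1 1 A.one_mem

variable (A) in
/-- The algebra `Ω^{0,0}` of functions. Its commutativity gives access to the theory of matrices
over commutative rings. -/
def functions : Subalgebra ℂ Ω :=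
  (A.deg 0 0).toSubalgebra A.one_mem fun _ _ => A.mul_mem

instance : CommRing A.functions where
  mul_comm a b := Subtype.ext <| by simpa using A.gcomm a.1 b.1 a.2 b.2

variable {r p q p' q' : ℕ} {M N : Matrix (Fin r) (Fin r) Ω}

namespace MatDeg

theorem one : A.MatDeg 0 0 (1 : Matrix (Fin r) (Fin r) Ω) := fun i j => by
  rw [Matrix.one_apply]
  split_ifs
  exacts [A.one_mem, zero_mem _]

theorem add (hM : A.MatDeg p q M) (hN : A.MatDeg p q N) : A.MatDeg p q (M + N) :=
  fun i j => add_mem (hM i j) (hN i j)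

theorem mul (hM : A.MatDeg p q M) (hN : A.MatDeg p' q' N) :
    A.MatDeg (p + p') (q + q') (M * N) := fun i j => by
  rw [Matrix.mul_apply]
  exact sum_mem fun k _ => A.mul_mem (hM i k) (hN k j)

theorem pow (hM : A.MatDeg p q M) (k : ℕ) : A.MatDeg (k * p) (k * q) (M ^ k) := by
  induction k with
  | zero => simpa using one
  | succ k ih => simpa only [pow_succ, Nat.succ_mul] using ih.mul hM

theorem mpd (hM : A.MatDeg p q M) : A.MatDeg (p + 1) q (A.mpd M) :=
  fun i j => A.pd_mem (hM i j)

theorem blockTriangular_inv {α : Type*} [LinearOrder α] {f : Fin r → α}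
    (hM : A.MatDeg 0 0 M) (hN : A.MatDeg 0 0 N) (hMN : M * N = 1) (hf : M.BlockTriangular f) :
    N.BlockTriangular f := by
  let M₀ : Matrix (Fin r) (Fin r) A.functions := .of fun i j => ⟨M i j, hM i j⟩
  let N₀ : Matrix (Fin r) (Fin r) A.functions := .of fun i j => ⟨N i j, hN i j⟩
  have hMN₀ : M₀ * N₀ = 1 :=
    Matrix.map_injective Subtype.val_injective <|
      (map_mul A.functions.val.mapMatrix M₀ N₀).trans <|
        hMN.trans (map_one A.functions.val.mapMatrix).symm
  have hf₀ : M₀.BlockTriangular f := fun i j hij => Subtype.ext (hf hij)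
  let := invertibleOfRightInverse M₀ N₀ hMN₀
  have hN₀ : N₀.BlockTriangular f :=
    Matrix.inv_eq_right_inv hMN₀ ▸ Matrix.blockTriangular_inv_of_blockTriangular hf₀
  exact fun i j hij => congrArg Subtype.val (hN₀ hij)

theorem trace_mul_comm (hM : A.MatDeg p q M) (hN : A.MatDeg p' q' N)
    (heven : Even ((p + q) * (p' + q'))) : (M * N).trace = (N * M).trace := by
  simp only [Matrix.trace, Matrix.diag_apply, Matrix.mul_apply]
  rw [Finset.sum_comm]
  refine Finset.sum_congr rfl fun i _ => Finset.sum_congr rfl fun j _ => ?_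
  rw [A.gcomm _ _ (hM j i) (hN i j), heven.neg_one_pow, one_smul]

theorem trace_conj (hM : A.MatDeg p q M) {g ginv : Matrix (Fin r) (Fin r) Ω}
    (hg : A.MatDeg 0 0 g) (hginv : A.MatDeg 0 0 ginv) (hmul : g * ginv = 1) :
    (ginv * M * g).trace = M.trace := by
  rw [mul_assoc, hginv.trace_mul_comm (hM.mul hg) (by simp), mul_assoc, hmul, mul_one]

theorem trace_pow_eq_zero {α : Type*} [LinearOrder α] {f : Fin r → α} (hM : A.MatDeg p q M)
    (hodd : Odd (p + q)) (hf : f.Injective) (htri : M.BlockTriangular f) {k : ℕ} (hk : 2 ≤ k) :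
    (M ^ k).trace = 0 := by
  refine Finset.sum_eq_zero fun i _ => ?_
  rw [Matrix.diag_apply, blockTriangular_pow_apply_self hf htri]
  exact pow_eq_zero_of_le hk <| (sq _).trans <| mul_self_eq_zero_of_odd (hM i i) hodd

theorem trace_mul_rotate {a b c d e : Matrix (Fin r) (Fin r) Ω} (ha : A.MatDeg p q a)
    (hb : A.MatDeg p q b) (hc : A.MatDeg p q c) (hd : A.MatDeg p q d) (he : A.MatDeg p q e) :
    (b * c * d * e * a).trace = (a * b * c * d * e).trace := by
  have hrot := (((hb.mul hc).mul hd).mul he).trace_mul_comm ha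
    (Even.mul_right ⟨2 * (p + q), by ring⟩ _)
  simpa only [mul_assoc] using hrot

theorem trace_add_pow_five {x y : Matrix (Fin r) (Fin r) Ω} (hx : A.MatDeg p q x)
    (hy : A.MatDeg p q y) :
    ((x + y) ^ 5).trace = (x ^ 5).trace + (y ^ 5).trace +
      5 • (x ^ 4 * y + x ^ 3 * y ^ 2 + x ^ 2 * y * x * y + x ^ 2 * y ^ 3 +
        x * y ^ 2 * x * y + x * y ^ 4).trace := by
  have rotations {a b c d e : Matrix (Fin r) (Fin r) Ω} (ha : A.MatDeg p q a)
      (hb : A.MatDeg p q b) (hc : A.MatDeg p q c) (hd : A.MatDeg p q d) (he : A.MatDeg p q e) :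
      (b * c * d * e * a).trace = (a * b * c * d * e).trace ∧
      (c * d * e * a * b).trace = (a * b * c * d * e).trace ∧
      (d * e * a * b * c).trace = (a * b * c * d * e).trace ∧
      (e * a * b * c * d).trace = (a * b * c * d * e).trace := by
    have h₁ := trace_mul_rotate ha hb hc hd he
    have h₂ := (trace_mul_rotate hb hc hd he ha).trans h₁
    have h₃ := (trace_mul_rotate hc hd he ha hb).trans h₂
    exact ⟨h₁, h₂, h₃, (trace_mul_rotate hd he ha hb hc).trans h₃⟩
  simp only [pow_succ, pow_zero, one_mul, mul_add, add_mul, ← mul_assoc, Matrix.trace_add,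
    rotations hx hx hx hx hy, rotations hx hx hx hy hy, rotations hx hx hy hx hy,
    rotations hx hx hy hy hy, rotations hx hy hy hx hy, rotations hx hy hy hy hy]
  abel

end MatDeg

theorem mpd_eq_mapMatrix (M : Matrix (Fin r) (Fin r) Ω) : A.mpd M = A.pd.mapMatrix M :=
  rfl

theorem mpd_mpd (M : Matrix (Fin r) (Fin r) Ω) : A.mpd (A.mpd M) = 0 :=
  Matrix.ext fun i j => A.pd_pd (M i j)

theorem mpd_one : A.mpd (1 : Matrix (Fin r) (Fin r) Ω) = 0 := by
  rw [mpd, ← Matrix.diagonal_one, Matrix.diagonal_map (map_zero A.pd)]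
  simp [pd_one]

theorem pd_trace (M : Matrix (Fin r) (Fin r) Ω) : A.pd M.trace = (A.mpd M).trace :=
  map_sum A.pd _ _

theorem mpd_mul (hM : A.MatDeg p q M) (N : Matrix (Fin r) (Fin r) Ω) :
    A.mpd (M * N) = A.mpd M * N + (-1 : ℂ) ^ (p + q) • (M * A.mpd N) := by
  ext i j
  simp only [mpd, Matrix.map_apply, Matrix.mul_apply, Matrix.add_apply, Matrix.smul_apply,
    map_sum, Finset.smul_sum, ← Finset.sum_add_distrib]
  exact Finset.sum_congr rfl fun k _ => A.pd_leibniz _ _ (hM i k)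

theorem mpd_mul_of_even (hM : A.MatDeg p q M) (heven : Even (p + q))
    (N : Matrix (Fin r) (Fin r) Ω) : A.mpd (M * N) = A.mpd M * N + M * A.mpd N := by
  rw [mpd_mul hM, heven.neg_one_pow, one_smul]

theorem mpd_mul_of_odd (hM : A.MatDeg p q M) (hodd : Odd (p + q))
    (N : Matrix (Fin r) (Fin r) Ω) : A.mpd (M * N) = A.mpd M * N - M * A.mpd N := by
  rw [mpd_mul hM, hodd.neg_one_pow, neg_one_smul, sub_eq_add_neg]

section MaurerCartan

variable {g ginv : Matrix (Fin r) (Fin r) Ω}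

theorem mpd_inv (hg : A.MatDeg 0 0 g) (hl : ginv * g = 1) (hr : g * ginv = 1) :
    A.mpd ginv = -(ginv * A.mpd g * ginv) := by
  have hsum : A.mpd g * ginv + g * A.mpd ginv = 0 := by
    rw [← mpd_mul_of_even hg Even.zero, hr, mpd_one]
  calc A.mpd ginv = ginv * (g * A.mpd ginv) := by rw [← mul_assoc, hl, one_mul]
    _ = -(ginv * A.mpd g * ginv) := by
      rw [eq_neg_of_add_eq_zero_right hsum, mul_neg, mul_assoc]

theorem mpd_mpd_mul_inv (hg : A.MatDeg 0 0 g) (hl : ginv * g = 1) (hr : g * ginv = 1) :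
    A.mpd (A.mpd g * ginv) = (A.mpd g * ginv) ^ 2 := by
  rw [mpd_mul_of_odd hg.mpd odd_one, mpd_mpd, mpd_inv hg hl hr]
  noncomm_ring

theorem mpd_inv_mul_mpd (hg : A.MatDeg 0 0 g) (hginv : A.MatDeg 0 0 ginv) (hl : ginv * g = 1)
    (hr : g * ginv = 1) : A.mpd (ginv * A.mpd g) = -(ginv * A.mpd g) ^ 2 := by
  rw [mpd_mul_of_even hginv Even.zero, mpd_mpd, mpd_inv hg hl hr]
  noncomm_ring

end MaurerCartan

theorem inv_mul_mpd_mul {b c binv cinv : Matrix (Fin r) (Fin r) Ω} (hc : A.MatDeg 0 0 c)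
    (hb : binv * b = 1) (hcinv : cinv * c = 1) :
    binv * cinv * A.mpd (c * b) = binv * (A.mpd b * binv + cinv * A.mpd c) * b := by
  calc binv * cinv * A.mpd (c * b)
      = binv * (cinv * c) * A.mpd b + binv * cinv * A.mpd c * b := by
        rw [mpd_mul_of_even hc Even.zero]
        noncomm_ring
    _ = binv * A.mpd b * (binv * b) + binv * cinv * A.mpd c * b := by
        rw [hcinv, hb, mul_one, mul_one]
    _ = binv * (A.mpd b * binv + cinv * A.mpd c) * b := by noncomm_ring

section Primitive

variable {x y : Matrix (Fin r) (Fin r) Ω}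

theorem mpd_sq_eq_zero (hx : A.MatDeg 1 0 x) {k : ℂ} (hdx : A.mpd x = k • x ^ 2) :
    A.mpd (x ^ 2) = 0 := by
  rw [sq, mpd_mul_of_odd hx odd_one, hdx, smul_mul_assoc, mul_smul_comm, ← pow_succ, ← pow_succ',
    sub_self]

theorem pd_trace_primitive (hx : A.MatDeg 1 0 x) (hy : A.MatDeg 1 0 y) (hdx : A.mpd x = x ^ 2)
    (hdy : A.mpd y = -y ^ 2) :
    A.pd (x ^ 3 * y + x * y ^ 3 + (1 / 2 : ℂ) • (x * y) ^ 2).trace =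
      (x ^ 4 * y + x ^ 3 * y ^ 2 + x ^ 2 * y * x * y + x ^ 2 * y ^ 3 +
        x * y ^ 2 * x * y + x * y ^ 4).trace := by
  have hxy : A.MatDeg 2 0 (x * y) := hx.mul hy
  have hdxy : A.mpd (x * y) = x ^ 2 * y + x * y ^ 2 := by
    rw [mpd_mul_of_odd hx odd_one, hdx, hdy, mul_neg, sub_neg_eq_add]
  have hd₁ : A.mpd (x ^ 3 * y) = x ^ 4 * y + x ^ 3 * y ^ 2 := by
    rw [pow_succ, mul_assoc, mpd_mul_of_even (hx.pow 2) even_two,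
      mpd_sq_eq_zero hx (k := 1) (by rw [hdx, one_smul]), hdxy]
    noncomm_ring
  have hd₂ : A.mpd (x * y ^ 3) = x ^ 2 * y ^ 3 + x * y ^ 4 := by
    rw [pow_succ', ← mul_assoc, mpd_mul_of_even hxy even_two,
      mpd_sq_eq_zero hy (k := -1) (by rw [hdy, neg_one_smul]), hdxy]
    noncomm_ring
  have hd₃ : (A.mpd ((x * y) ^ 2)).trace =
      (2 : ℂ) • (x ^ 2 * y * x * y + x * y ^ 2 * x * y).trace := by
    rw [sq, mpd_mul_of_even hxy even_two, Matrix.trace_add,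
      hxy.trace_mul_comm hxy.mpd (by decide), ← two_smul ℂ, hdxy]
    noncomm_ring
  rw [pd_trace, mpd_eq_mapMatrix, map_add, map_add, map_smul]
  simp only [← mpd_eq_mapMatrix, Matrix.trace_add, Matrix.trace_smul, hd₁, hd₂, hd₃]
  module

end Primitive

end DolbeaultAlgebra

open DolbeaultAlgebra in
theorem stmt17_general (A : DolbeaultAlgebra Ω) {r : ℕ} {α β : Type*} [LinearOrder α]
    [LinearOrder β] {f : Fin r → α} {g : Fin r → β} (hf : f.Injective) (hg : g.Injective)
    {b c binv cinv θ₁ θ₂ : Matrix (Fin r) (Fin r) Ω}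
    (hbdeg : A.MatDeg 0 0 b) (hcdeg : A.MatDeg 0 0 c)
    (hbinvdeg : A.MatDeg 0 0 binv) (hcinvdeg : A.MatDeg 0 0 cinv)
    (hb : b.BlockTriangular f) (hc : c.BlockTriangular g)
    (hbinvl : binv * b = 1) (hbinvr : b * binv = 1)
    (hcinvl : cinv * c = 1) (hcinvr : c * cinv = 1)
    (hθ₁ : θ₁ = A.mpd b * binv) (hθ₂ : θ₂ = cinv * A.mpd c) :
    (1 / 10 : ℂ) • ((binv * cinv * A.mpd (c * b)) ^ 5).trace =
      A.pd ((1 / 2 : ℂ) • (θ₁ ^ 3 * θ₂ + θ₁ * θ₂ ^ 3 + (1 / 2 : ℂ) • (θ₁ * θ₂) ^ 2).trace) := by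
  have hdeg₁ : A.MatDeg 1 0 θ₁ := hθ₁ ▸ hbdeg.mpd.mul hbinvdeg
  have hdeg₂ : A.MatDeg 1 0 θ₂ := hθ₂ ▸ hcinvdeg.mul hcdeg.mpd
  have htrace₁ : (θ₁ ^ 5).trace = 0 :=
    hdeg₁.trace_pow_eq_zero odd_one hf
      (hθ₁ ▸ (hb.map A.pd).mul (hbdeg.blockTriangular_inv hbinvdeg hbinvr hb)) (by decide)
  have htrace₂ : (θ₂ ^ 5).trace = 0 :=
    hdeg₂.trace_pow_eq_zero odd_one hg
      (hθ₂ ▸ (hcdeg.blockTriangular_inv hcinvdeg hcinvr hc).mul (hc.map A.pd)) (by decide)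
  have hconj : ((binv * cinv * A.mpd (c * b)) ^ 5).trace = ((θ₁ + θ₂) ^ 5).trace := by
    let u : (Matrix (Fin r) (Fin r) Ω)ˣ := ⟨b, binv, hbinvr, hbinvl⟩
    rw [inv_mul_mpd_mul hcdeg hbinvl hcinvl, ← hθ₁, ← hθ₂,
      ← ((hdeg₁.add hdeg₂).pow 5).trace_conj hbdeg hbinvdeg hbinvr]
    exact congrArg _ (u.conj_pow' (θ₁ + θ₂) 5)
  rw [hconj, hdeg₁.trace_add_pow_five hdeg₂, htrace₁, htrace₂, map_smul,
    pd_trace_primitive hdeg₁ hdeg₂ (hθ₁ ▸ mpd_mpd_mul_inv hbdeg hbinvl hbinvr)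
      (hθ₂ ▸ mpd_inv_mul_mpd hcdeg hcinvdeg hcinvl hcinvr)]
  module

/-- (Bottom of the ascent for `k = 3`) In the Cholesky setting,
`(1/10)Tr(Bθ⁵) = ∂((1/2)Tr(θ₁³θ₂ + θ₁θ₂³ + (1/2)(θ₁θ₂)²))`. -/
theorem stmt17
    (A : DolbeaultAlgebra Ω) (r : ℕ) (hr : 1 ≤ r)
    (b c binv cinv : Matrix (Fin r) (Fin r) Ω)
    (hbdeg : A.MatDeg 0 0 b) (hcdeg : A.MatDeg 0 0 c)
    (hbinvdeg : A.MatDeg 0 0 binv) (hcinvdeg : A.MatDeg 0 0 cinv)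
    (hbu : ∀ i j : Fin r, j < i → b i j = 0) (hbd : ∀ i : Fin r, b i i = 1)
    (hcl : ∀ i j : Fin r, i < j → c i j = 0)
    (hbinvl : binv * b = 1) (hbinvr : b * binv = 1)
    (hcinvl : cinv * c = 1) (hcinvr : c * cinv = 1)
    (h hinv : Matrix (Fin r) (Fin r) Ω) (hh : h = c * b) (hhinv : hinv = binv * cinv)
    (θ₁ θ₂ θ θb₁ θb₂ θb : Matrix (Fin r) (Fin r) Ω)
    (hθ₁ : θ₁ = A.mpd b * binv) (hθ₂ : θ₂ = cinv * A.mpd c) (hθ : θ = θ₁ + θ₂)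
    (hθb₁ : θb₁ = A.mpdb b * binv) (hθb₂ : θb₂ = cinv * A.mpdb c) (hθb : θb = θb₁ + θb₂)
    (Bθ Bθb BΘ : Matrix (Fin r) (Fin r) Ω)
    (hBθ : Bθ = hinv * A.mpd h) (hBθb : Bθb = hinv * A.mpdb h) (hBΘ : BΘ = A.mpdb Bθ) :
    (1 / 10 : ℂ) • Matrix.trace (Bθ ^ 5) =
      A.pd ((1 / 2 : ℂ) • Matrix.trace
        (θ₁ ^ 3 * θ₂ + θ₁ * θ₂ ^ 3 + (1 / 2 : ℂ) • (θ₁ * θ₂) ^ 2)) := by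
  subst hh hhinv hBθ
  exact stmt17_general A Function.injective_id OrderDual.toDual.injective hbdeg hcdeg hbinvdeg
    hcinvdeg hbu hcl hbinvl hbinvr hcinvl hcinvr hθ₁ hθ₂
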